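/- (Trapping from rest, steady case.) Let g > 0 and let ζ: ℝ² → ℝ be a smooth time-independent surface elevation. Let (x(t), y(t)) be a C² solution of the steady John–Sclavounos equations starting from rest, i.e., ẋ(0) = ẏ(0) = 0, with initial position x₀ = (x(0), y(0)). Then ζ(x(t), y(t)) ≤ ζ(x₀) for all t in the interval of existence of the solution. -/

import Mathlib

noncomputable section

/-- Partial derivative of `ζ(x,y)` with respect to `x`. -/
def dx (ζ : ℝ × ℝ → ℝ) (p : ℝ × ℝ) : ℝ := fderiv ℝ ζ p (1, 0)

/-- Partial derivative of `ζ(x,y)` with respect to `y`. -/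
def dy (ζ : ℝ × ℝ → ℝ) (p : ℝ × ℝ) : ℝ := fderiv ℝ ζ p (0, 1)

def dxx (ζ : ℝ × ℝ → ℝ) (p : ℝ × ℝ) : ℝ := fderiv ℝ (dx ζ) p (1, 0)
def dxy (ζ : ℝ × ℝ → ℝ) (p : ℝ × ℝ) : ℝ := fderiv ℝ (dx ζ) p (0, 1)
def dyy (ζ : ℝ × ℝ → ℝ) (p : ℝ × ℝ) : ℝ := fderiv ℝ (dy ζ) p (0, 1)

/-- The steady John–Sclavounos equations for a horizontal trajectory `(x(t), y(t))` on
the time-independent surface `z = ζ(x,y)`, at time `t`, with gravity `g`: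
`(1+ζ_x²)ẍ + ζ_xζ_y ÿ + Q ζ_x = 0` and `(1+ζ_y²)ÿ + ζ_xζ_y ẍ + Q ζ_y = 0`, where
`Q = ζ_xx ẋ² + 2ζ_xy ẋẏ + ζ_yy ẏ² + g`. -/
def SteadyJSEq (g : ℝ) (ζ : ℝ × ℝ → ℝ) (x y : ℝ → ℝ) (t : ℝ) : Prop :=
  (1 + dx ζ (x t, y t) ^ 2) * deriv (deriv x) t
      + dx ζ (x t, y t) * dy ζ (x t, y t) * deriv (deriv y) t
      + (dxx ζ (x t, y t) * (deriv x t) ^ 2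
          + 2 * dxy ζ (x t, y t) * deriv x t * deriv y t
          + dyy ζ (x t, y t) * (deriv y t) ^ 2 + g) * dx ζ (x t, y t) = 0
  ∧ (1 + dy ζ (x t, y t) ^ 2) * deriv (deriv y) t
      + dx ζ (x t, y t) * dy ζ (x t, y t) * deriv (deriv x) t
      + (dxx ζ (x t, y t) * (deriv x t) ^ 2
          + 2 * dxy ζ (x t, y t) * deriv x t * deriv y t
          + dyy ζ (x t, y t) * (deriv y t) ^ 2 + g) * dy ζ (x t, y t) = 0

/-!
Put `z(t) = ζ(x(t), y(t))`, the height of the particle. The coefficient `Q` is `g` plus the part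
of `z̈` that is quadratic in the velocities, so the steady John–Sclavounos equations read
`ẍ + (z̈ + g) ζ_x = 0` and `ÿ + (z̈ + g) ζ_y = 0`. Multiplying them by `ẋ` and `ẏ`, adding, and
using `ż = ẋ ζ_x + ẏ ζ_y` gives `ẋẍ + ẏÿ + żz̈ + gż = 0`: the energy `g z + ½(ẋ² + ẏ² + ż²)` is
conserved. Since kinetic energy is nonnegative and vanishes at rest, the particle never rises
above the height at which it is at rest.
-/

section Calculus

variable {𝕜 E F : Type*}

lemma eq_of_hasDerivWithinAt_zero_of_convex [RCLike 𝕜] [NormedAddCommGroup F] [NormedSpace 𝕜 F]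
    {f : 𝕜 → F} {s : Set 𝕜} (hs : Convex ℝ s) (hf : ∀ t ∈ s, HasDerivWithinAt f 0 s t)
    {a b : 𝕜} (ha : a ∈ s) (hb : b ∈ s) : f b = f a := by
  have h := hs.norm_image_sub_le_of_norm_hasDerivWithin_le hf (fun _ _ => norm_zero.le) ha hb
  rwa [zero_mul, norm_le_zero_iff, sub_eq_zero] at h

variable [NontriviallyNormedField 𝕜] [NormedAddCommGroup E] [NormedSpace 𝕜 E]
  [NormedAddCommGroup F] [NormedSpace 𝕜 F] {f : E → F} {p : E}

lemma differentiableAt_fderiv_of_contDiffAt_two (hf : ContDiffAt 𝕜 2 f p) :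
    DifferentiableAt 𝕜 (fderiv 𝕜 f) p :=
  (hf.fderiv_right (m := 1) one_add_one_eq_two.le).differentiableAt one_ne_zero

lemma fderiv_fderiv_apply (hf : DifferentiableAt 𝕜 (fderiv 𝕜 f) p) (v w : E) :
    fderiv 𝕜 (fun q => fderiv 𝕜 f q v) p w = fderiv 𝕜 (fderiv 𝕜 f) p w v := by
  simp [fderiv_clm_apply hf (differentiableAt_const v)]

end Calculus

section PartialDerivatives

variable {f : ℝ × ℝ → ℝ} {p : ℝ × ℝ}

lemma fderiv_apply_eq_dx_add_dy (a b : ℝ) :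
    fderiv ℝ f p (a, b) = a * dx f p + b * dy f p := by
  have hab : ((a, b) : ℝ × ℝ) = a • (1, 0) + b • (0, 1) := by simp
  rw [hab, map_add, map_smul, map_smul]
  rfl

lemma hasDerivAt_comp_curve {x y : ℝ → ℝ} {x' y' t : ℝ} (hf : DifferentiableAt ℝ f (x t, y t))
    (hx : HasDerivAt x x' t) (hy : HasDerivAt y y' t) :
    HasDerivAt (fun s => f (x s, y s)) (x' * dx f (x t, y t) + y' * dy f (x t, y t)) t := by
  rw [← fderiv_apply_eq_dx_add_dy]
  exact hf.hasFDerivAt.comp_hasDerivAt t (hx.prodMk hy)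

lemma differentiableAt_dx (hf : ContDiffAt ℝ 2 f p) : DifferentiableAt ℝ (dx f) p :=
  (differentiableAt_fderiv_of_contDiffAt_two hf).clm_apply (differentiableAt_const _)

lemma differentiableAt_dy (hf : ContDiffAt ℝ 2 f p) : DifferentiableAt ℝ (dy f) p :=
  (differentiableAt_fderiv_of_contDiffAt_two hf).clm_apply (differentiableAt_const _)

lemma dx_dy_eq_dxy (hf : ContDiffAt ℝ 2 f p) : dx (dy f) p = dxy f p := by
  have hf' := differentiableAt_fderiv_of_contDiffAt_two hf
  have hsymm : IsSymmSndFDerivAt ℝ f p := hf.isSymmSndFDerivAt (by simp)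
  calc dx (dy f) p
      = fderiv ℝ (fderiv ℝ f) p (1, 0) (0, 1) := fderiv_fderiv_apply hf' _ _
    _ = fderiv ℝ (fderiv ℝ f) p (0, 1) (1, 0) := hsymm.eq _ _
    _ = dxy f p := (fderiv_fderiv_apply hf' _ _).symm

end PartialDerivatives

/-- The vertical velocity `ż = u · ∇ζ`, where `z(t) = ζ(x(t), y(t))`, written out through the chain
rule. -/
def verticalVelocity (ζ : ℝ × ℝ → ℝ) (x y : ℝ → ℝ) (t : ℝ) : ℝ :=
  deriv x t * dx ζ (x t, y t) + deriv y t * dy ζ (x t, y t)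

/-- The vertical acceleration `z̈`, where `z(t) = ζ(x(t), y(t))`, written out through the chain
rule, with the two mixed second partial derivatives of `ζ` identified. -/
def verticalAcceleration (ζ : ℝ × ℝ → ℝ) (x y : ℝ → ℝ) (t : ℝ) : ℝ :=
  deriv (deriv x) t * dx ζ (x t, y t) + deriv (deriv y) t * dy ζ (x t, y t)
    + (dxx ζ (x t, y t) * deriv x t ^ 2 + 2 * dxy ζ (x t, y t) * deriv x t * deriv y t
      + dyy ζ (x t, y t) * deriv y t ^ 2)

/-- The Hamiltonian `g ζ + ½|u|² + ½(u·∇ζ)²` along a trajectory: the energy per unit mass of the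
particle on the surface. -/
def steadyJSHamiltonian (g : ℝ) (ζ : ℝ × ℝ → ℝ) (x y : ℝ → ℝ) (t : ℝ) : ℝ :=
  g * ζ (x t, y t) + (deriv x t ^ 2 + deriv y t ^ 2) / 2 + verticalVelocity ζ x y t ^ 2 / 2

section Trajectory

variable {g : ℝ} {ζ : ℝ × ℝ → ℝ} {x y : ℝ → ℝ} {t : ℝ}

lemma hasDerivAt_verticalVelocity (hζ : ContDiffAt ℝ 2 ζ (x t, y t))
    (hx : DifferentiableAt ℝ x t) (hx' : DifferentiableAt ℝ (deriv x) t)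
    (hy : DifferentiableAt ℝ y t) (hy' : DifferentiableAt ℝ (deriv y) t) :
    HasDerivAt (verticalVelocity ζ x y) (verticalAcceleration ζ x y t) t := by
  have hζx : HasDerivAt (fun s => dx ζ (x s, y s))
      (deriv x t * dxx ζ (x t, y t) + deriv y t * dxy ζ (x t, y t)) t :=
    hasDerivAt_comp_curve (differentiableAt_dx hζ) hx.hasDerivAt hy.hasDerivAt
  have hζy : HasDerivAt (fun s => dy ζ (x s, y s))
      (deriv x t * dxy ζ (x t, y t) + deriv y t * dyy ζ (x t, y t)) t := by
    rw [← dx_dy_eq_dxy hζ]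
    exact hasDerivAt_comp_curve (differentiableAt_dy hζ) hx.hasDerivAt hy.hasDerivAt
  refine ((hx'.hasDerivAt.mul hζx).add (hy'.hasDerivAt.mul hζy)).congr_deriv ?_
  rw [verticalAcceleration]
  ring

lemma steadyJSEq_iff_verticalAcceleration :
    SteadyJSEq g ζ x y t ↔
      deriv (deriv x) t + (verticalAcceleration ζ x y t + g) * dx ζ (x t, y t) = 0 ∧
      deriv (deriv y) t + (verticalAcceleration ζ x y t + g) * dy ζ (x t, y t) = 0 := by
  unfold SteadyJSEq verticalAcceleration
  ring_nf

lemma SteadyJSEq.hasDerivAt_hamiltonian (h : SteadyJSEq g ζ x y t)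
    (hζ : ContDiffAt ℝ 2 ζ (x t, y t))
    (hx : DifferentiableAt ℝ x t) (hx' : DifferentiableAt ℝ (deriv x) t)
    (hy : DifferentiableAt ℝ y t) (hy' : DifferentiableAt ℝ (deriv y) t) :
    HasDerivAt (steadyJSHamiltonian g ζ x y) 0 t := by
  have hheight : HasDerivAt (fun s => ζ (x s, y s)) (verticalVelocity ζ x y t) t :=
    hasDerivAt_comp_curve (hζ.differentiableAt two_ne_zero) hx.hasDerivAt hy.hasDerivAt
  have hvertical := hasDerivAt_verticalVelocity hζ hx hx' hy hy'
  have henergy := ((hheight.const_mul g).add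
    (((hx'.hasDerivAt.pow 2).add (hy'.hasDerivAt.pow 2)).div_const 2)).add
    ((hvertical.pow 2).div_const 2)
  obtain ⟨hJSx, hJSy⟩ := steadyJSEq_iff_verticalAcceleration.mp h
  refine henergy.congr_deriv ?_
  simp only [Nat.cast_ofNat, Nat.add_one_sub_one, pow_one]
  rw [verticalVelocity]
  linear_combination deriv x t * hJSx + deriv y t * hJSy

lemma potential_le_hamiltonian (g : ℝ) (ζ : ℝ × ℝ → ℝ) (x y : ℝ → ℝ) (t : ℝ) :
    g * ζ (x t, y t) ≤ steadyJSHamiltonian g ζ x y t := by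
  rw [steadyJSHamiltonian, add_assoc]
  exact le_add_of_nonneg_right (by positivity)

lemma hamiltonian_eq_potential_of_rest (hx : deriv x t = 0) (hy : deriv y t = 0) :
    steadyJSHamiltonian g ζ x y t = g * ζ (x t, y t) := by
  simp [steadyJSHamiltonian, verticalVelocity, hx, hy]

theorem steadyJS_trapping_from_rest_general {J : Set ℝ} {t₀ : ℝ} (hg : 0 < g)
    (hJ : J.OrdConnected) (ht₀ : t₀ ∈ J) (hζ : ∀ t ∈ J, ContDiffAt ℝ 2 ζ (x t, y t))
    (hx : ∀ t ∈ J, DifferentiableAt ℝ x t) (hx' : ∀ t ∈ J, DifferentiableAt ℝ (deriv x) t)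
    (hy : ∀ t ∈ J, DifferentiableAt ℝ y t) (hy' : ∀ t ∈ J, DifferentiableAt ℝ (deriv y) t)
    (hJS : ∀ t ∈ J, SteadyJSEq g ζ x y t) (hrest : deriv x t₀ = 0 ∧ deriv y t₀ = 0) :
    ∀ t ∈ J, ζ (x t, y t) ≤ ζ (x t₀, y t₀) := by
  intro t ht
  have hconserved : steadyJSHamiltonian g ζ x y t = steadyJSHamiltonian g ζ x y t₀ :=
    eq_of_hasDerivWithinAt_zero_of_convex hJ.convex
      (fun s hs => ((hJS s hs).hasDerivAt_hamiltonian (hζ s hs) (hx s hs) (hx' s hs)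
        (hy s hs) (hy' s hs)).hasDerivWithinAt) ht₀ ht
  refine le_of_mul_le_mul_left ?_ hg
  calc g * ζ (x t, y t)
      ≤ steadyJSHamiltonian g ζ x y t := potential_le_hamiltonian g ζ x y t
    _ = steadyJSHamiltonian g ζ x y t₀ := hconserved
    _ = g * ζ (x t₀, y t₀) := hamiltonian_eq_potential_of_rest hrest.1 hrest.2

end Trajectory

/-- (Trapping from rest, steady case.) A particle obeying the steady
John–Sclavounos equations and starting from rest (`ẋ(0) = ẏ(0) = 0`) satisfies
`ζ(x(t), y(t)) ≤ ζ(x(0), y(0))` for all time. -/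
theorem steadyJS_trapping_from_rest
    (g : ℝ) (hg : 0 < g) (ζ : ℝ × ℝ → ℝ) (hζ : ContDiff ℝ 2 ζ)
    (x y : ℝ → ℝ) (hx : ContDiff ℝ 2 x) (hy : ContDiff ℝ 2 y)
    (J : Set ℝ) (hJ : J.OrdConnected) (h0 : (0 : ℝ) ∈ J)
    (hJS : ∀ t ∈ J, SteadyJSEq g ζ x y t)
    (hrest : deriv x 0 = 0 ∧ deriv y 0 = 0) :
    ∀ t ∈ J, ζ (x t, y t) ≤ ζ (x 0, y 0) := by
  exact steadyJS_trapping_from_rest_general hg hJ h0 (fun _ _ => hζ.contDiffAt)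
    (fun t _ => hx.differentiable two_ne_zero t) (fun t _ => hx.differentiable_deriv_two t)
    (fun t _ => hy.differentiable two_ne_zero t) (fun t _ => hy.differentiable_deriv_two t)
    hJS hrest

end
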